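/- There exists c > 0 such that for every word w with letters in {1,2,3} whose last two letters are different, and every vector v ∈ ℝ³ with nonnegative coordinates, one has ‖A_w v‖ ≥ c · ‖A_w‖ · ‖v‖, where ‖A_w‖ is the ℓ²-operator norm. -/

import Mathlib

/-!
If `v` is nonnegative, the coordinates of `B v` add up to `∑ⱼ sⱼ vⱼ`, where `s = 1 ᵥ* B` is the
vector of column sums of `B`. So for nonnegative `B` the norm `‖B v‖` is comparable to `‖B‖ ‖v‖`,
uniformly in `v`, as soon as the column sums of `B` are comparable to each other.

The column sums of any product of Rauzy generators satisfy `xᵢ ≤ xⱼ + xₖ` for all `i` and all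
`j ≠ k`: this holds for the identity, and right multiplication by the generator of `a` adds `x_a`
to every other coordinate, which preserves it. After two further letters `a ≠ b`, the column sums
are `x_a + x_b` at `b`, `2 x_a + x_b` at `a` and `x_j + 2 x_a + x_b` at any other `j`; since
`x_j ≤ x_a + x_b`, all of them lie between `x_a + x_b` and `3 (x_a + x_b)`.
-/

open Matrix MeasureTheory

noncomputable section

abbrev M3 := Matrix (Fin 3) (Fin 3) ℝ
abbrev E3 := EuclideanSpace ℝ (Fin 3)

/-- The Rauzy generators. -/
def A : Fin 3 → M3
  | 0 => !![1,1,1; 0,1,0; 0,0,1]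
  | 1 => !![1,0,0; 1,1,1; 0,0,1]
  | 2 => !![1,0,0; 0,1,0; 1,1,1]

/-- Product of the matrices along a word. -/
def Aw (w : List (Fin 3)) : M3 := (w.map A).prod

/-- Euclidean norm of a vector in `ℝ³`. -/
def enorm3 (v : Fin 3 → ℝ) : ℝ := Real.sqrt (v 0 ^ 2 + v 1 ^ 2 + v 2 ^ 2)

/-- Largest singular value = `ℓ²` operator norm. -/
def sval1 (g : M3) : ℝ := ‖(Matrix.toEuclideanLin g).toContinuousLinearMap‖

/-- Smallest singular value (for invertible `g`): `σ₃(g) = σ₁(g⁻¹)⁻¹`. -/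
def sval3 (g : M3) : ℝ := (sval1 g⁻¹)⁻¹

/-- Middle singular value (for invertible `g`): `σ₂ = |det g|·σ₁(g⁻¹)/σ₁(g)`. -/
def sval2 (g : M3) : ℝ := |g.det| * sval1 g⁻¹ / sval1 g

def basis3 (i : Fin 3) : Fin 3 → ℝ := Pi.single i 1

def omega3 (v : Fin 3 → ℝ) : ℝ := v 0 + v 1 + v 2

def ofE : E3 → (Fin 3 → ℝ) := WithLp.equiv 2 (Fin 3 → ℝ)
def toE : (Fin 3 → ℝ) → E3 := (WithLp.equiv 2 (Fin 3 → ℝ)).symm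

/-- The standard 2-simplex in `ℝ³` (with the Euclidean metric). -/
def simplex : Set E3 := {x | (∀ i, 0 ≤ ofE x i) ∧ omega3 (ofE x) = 1}

/-- The projective action of the word `w` on the simplex. -/
def fmap (w : List (Fin 3)) (x : E3) : E3 :=
  toE ((omega3 ((Aw w) *ᵥ ofE x))⁻¹ • ((Aw w) *ᵥ ofE x))

/-- The Rauzy gasket. -/
def gasket : Set E3 :=
  ⋂ n : ℕ, ⋃ w ∈ {w : List (Fin 3) | w.length = n + 1}, fmap w '' simplex

/-- Falconer's singular value function. -/
def phi (s : ℝ) (g : M3) : ℝ :=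
  if s ≤ 1 then (sval2 g / sval1 g) ^ s
  else (sval2 g / sval1 g) * (sval3 g / sval1 g) ^ (s - 1)

/-- The affinity exponent of the Rauzy semigroup. -/
def sA : ℝ :=
  sSup {s : ℝ | s ∈ Set.Ioc (0:ℝ) 2 ∧
    ¬ Summable fun w : {w : List (Fin 3) // w ≠ []} => phi s (Aw w.1)}

/-- A word has its last `k` letters not all the same. -/
def LastNotAllSame (w : List (Fin 3)) (k : ℕ) : Prop :=
  k ≤ w.length ∧ ¬ ∃ c, ∀ x ∈ w.drop (w.length - k), x = c

/-- A word's last two letters are different. -/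
def LastTwoDiff (w : List (Fin 3)) : Prop :=
  ∃ u a b, w = u ++ [a, b] ∧ a ≠ b

/-- The Cartan projection `κ(g) = (log σ₁, log σ₂, log σ₃)`. -/
def kappa (g : M3) : Fin 3 → ℝ :=
  ![Real.log (sval1 g), Real.log (sval2 g), Real.log (sval3 g)]

/-- The linear functional `ψ_s` on the Cartan algebra. -/
def psi (s : ℝ) (lam : Fin 3 → ℝ) : ℝ := (lam 0 - lam 1) + (s - 1) * (lam 0 - lam 2)

end

open WithLp
open scoped Matrix.Norms.L2Operator

section Norms

variable {m n 𝕜 : Type*} [Fintype m] [Fintype n] [RCLike 𝕜]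

lemma euclideanNorm_le_sum_norm (x : EuclideanSpace 𝕜 n) : ‖x‖ ≤ ∑ i, ‖x i‖ := by
  rw [EuclideanSpace.norm_eq]
  exact Real.sqrt_le_iff.2
    ⟨by positivity, Finset.sum_sq_le_sq_sum_of_nonneg fun i _ => norm_nonneg (x i)⟩

lemma sum_norm_le_sqrt_card_mul_euclideanNorm (x : EuclideanSpace 𝕜 n) :
    ∑ i, ‖x i‖ ≤ √(Fintype.card n) * ‖x‖ := by
  rw [EuclideanSpace.norm_eq, ← Real.sqrt_mul (Nat.cast_nonneg _)]
  exact Real.le_sqrt_of_sq_le sq_sum_le_card_mul_sum_sq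

lemma l2_opNorm_le_of_sum_norm_le [DecidableEq n] (B : Matrix m n 𝕜) {M : ℝ} (hM₀ : 0 ≤ M)
    (hM : ∀ j, ∑ i, ‖B i j‖ ≤ M) : ‖B‖ ≤ √(Fintype.card n) * M := by
  rw [l2_opNorm_def]
  refine ContinuousLinearMap.opNorm_le_bound _ (by positivity) fun x => ?_
  change ‖toLp 2 (B *ᵥ ofLp x)‖ ≤ _
  calc ‖toLp 2 (B *ᵥ ofLp x)‖
      ≤ ∑ i, ‖∑ j, B i j * x j‖ := euclideanNorm_le_sum_norm _
    _ ≤ ∑ i, ∑ j, ‖B i j‖ * ‖x j‖ := by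
        gcongr with i
        exact norm_sum_le_of_le _ fun j _ => norm_mul_le _ _
    _ = ∑ j, (∑ i, ‖B i j‖) * ‖x j‖ := by
        rw [Finset.sum_comm]
        simp_rw [Finset.sum_mul]
    _ ≤ ∑ j, M * ‖x j‖ := by
        gcongr with j
        exact hM j
    _ = M * ∑ j, ‖x j‖ := by rw [Finset.mul_sum]
    _ ≤ M * (√(Fintype.card n) * ‖x‖) := by
        gcongr
        exact sum_norm_le_sqrt_card_mul_euclideanNorm x
    _ = √(Fintype.card n) * M * ‖x‖ := by ring

lemma mul_euclideanNorm_le_of_le_one_vecMul (B : Matrix m n ℝ) {c : ℝ} (hc₀ : 0 ≤ c)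
    (hc : ∀ j, c ≤ (1 ᵥ* B) j) {v : n → ℝ} (hv : ∀ j, 0 ≤ v j) :
    c * ‖toLp 2 v‖ ≤ √(Fintype.card m) * ‖toLp 2 (B *ᵥ v)‖ :=
  calc c * ‖toLp 2 v‖
      ≤ c * ∑ j, ‖v j‖ := by
        gcongr
        exact euclideanNorm_le_sum_norm _
    _ = ∑ j, c * v j := by simp_rw [Finset.mul_sum, Real.norm_of_nonneg (hv _)]
    _ ≤ (1 ᵥ* B) ⬝ᵥ v := Finset.sum_le_sum fun j _ => mul_le_mul_of_nonneg_right (hc j) (hv j)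
    _ = ∑ i, (B *ᵥ v) i := by rw [← dotProduct_mulVec, one_dotProduct]
    _ ≤ ∑ i, ‖(B *ᵥ v) i‖ := Finset.sum_le_sum fun i _ => Real.le_norm_self _
    _ ≤ √(Fintype.card m) * ‖toLp 2 (B *ᵥ v)‖ :=
        sum_norm_le_sqrt_card_mul_euclideanNorm (toLp 2 (B *ᵥ v))

lemma l2_opNorm_mul_euclideanNorm_le_of_one_vecMul_le [DecidableEq n] {B : Matrix m n ℝ}
    (hB : ∀ i j, 0 ≤ B i j) {c K : ℝ} (hc₀ : 0 ≤ c) (hK₀ : 0 ≤ K)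
    (hc : ∀ j, c ≤ (1 ᵥ* B) j) (hK : ∀ j, (1 ᵥ* B) j ≤ K * c) {v : n → ℝ}
    (hv : ∀ j, 0 ≤ v j) :
    ‖B‖ * ‖toLp 2 v‖ ≤
      K * √(Fintype.card n) * √(Fintype.card m) * ‖toLp 2 (B *ᵥ v)‖ := by
  have sum_norm_eq (j : n) : ∑ i, ‖B i j‖ = (1 ᵥ* B) j := by
    simp [vecMul, dotProduct, abs_of_nonneg (hB _ _)]
  calc ‖B‖ * ‖toLp 2 v‖
      ≤ √(Fintype.card n) * (K * c) * ‖toLp 2 v‖ := by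
        gcongr
        exact l2_opNorm_le_of_sum_norm_le B (by positivity) fun j => (sum_norm_eq j).trans_le (hK j)
    _ = K * √(Fintype.card n) * (c * ‖toLp 2 v‖) := by ring
    _ ≤ K * √(Fintype.card n) * (√(Fintype.card m) * ‖toLp 2 (B *ᵥ v)‖) := by
        gcongr K * √_ * ?_
        exact mul_euclideanNorm_le_of_le_one_vecMul B hc₀ hc hv
    _ = _ := by ring

end Norms

lemma list_prod_apply_nonneg {n R : Type*} [Fintype n] [DecidableEq n] [Semiring R]
    [PartialOrder R] [IsOrderedRing R] {l : List (Matrix n n R)}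
    (hl : ∀ B ∈ l, ∀ i j, 0 ≤ B i j) : ∀ i j, 0 ≤ l.prod i j := by
  refine List.prod_induction (fun B : Matrix n n R => ∀ i j, 0 ≤ B i j) (fun B C hB hC i j => ?_)
    (fun i j => ?_) hl
  · exact Finset.sum_nonneg fun k _ => mul_nonneg (hB i k) (hC k j)
  · rw [one_apply]
    split_ifs <;> simp

section PairTriangle

variable {ι R : Type*}

/-- Every coordinate is at most the sum of any two coordinates with distinct indices. The index
on the left may be one of these two, so nonnegativity of the coordinates is included as soon as
there are at least two of them. -/
def PairTriangle [Add R] [LE R] (x : ι → R) : Prop := ∀ i j k, j ≠ k → x i ≤ x j + x k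

lemma PairTriangle.nonneg [Nontrivial ι] [AddGroup R] [LE R] [AddLeftMono R] {x : ι → R}
    (hx : PairTriangle x) (i : ι) : 0 ≤ x i := by
  obtain ⟨j, hj⟩ := exists_ne i
  simpa using hx j j i hj

lemma pairTriangle_one [AddMonoidWithOne R] [LE R] [ZeroLEOneClass R] [AddLeftMono R] :
    PairTriangle (1 : ι → R) :=
  fun _ _ _ _ => le_add_of_nonneg_right zero_le_one

end PairTriangle

section Rauzy

variable {ι R : Type*} [Fintype ι] [DecidableEq ι]

section Semiring

variable [Semiring R]

/-- The Rauzy generator in arbitrary dimension: the identity matrix with all entries of row `a`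
replaced by `1`. On `Fin 3` this is `A a`. -/
def rauzyGen (a : ι) : Matrix ι ι R := (1 : Matrix ι ι R).updateRow a 1

/-- The product of the Rauzy generators along a word, with the first letter leftmost. -/
def rauzyProd (w : List ι) : Matrix ι ι R := (w.map rauzyGen).prod

lemma rauzyProd_apply_nonneg [PartialOrder R] [IsOrderedRing R] (w : List ι) (i j : ι) :
    0 ≤ (rauzyProd w : Matrix ι ι R) i j := by
  refine list_prod_apply_nonneg ?_ i j
  simp only [List.forall_mem_map, rauzyGen, updateRow_apply, one_apply]
  intro a _ i j
  split_ifs <;> simp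

lemma vecMul_rauzyGen (x : ι → R) (a j : ι) :
    (x ᵥ* rauzyGen a) j = if j = a then x a else x j + x a := by
  have entry (i : ι) : (rauzyGen a : Matrix ι ι R) i j =
      (if i = j then 1 else 0) + if i = a ∧ j ≠ a then 1 else 0 := by
    simp only [rauzyGen, updateRow_apply, one_apply, Pi.one_apply]
    grind
  simp only [vecMul, dotProduct, entry]
  by_cases hj : j = a <;> simp [hj, mul_add, Finset.sum_add_distrib]

end Semiring

variable [CommRing R] [LinearOrder R] [IsStrictOrderedRing R] {x : ι → R}

lemma PairTriangle.vecMul_rauzyGen (hx : PairTriangle x) (a : ι) :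
    PairTriangle (x ᵥ* rauzyGen a) := by
  intro i j k hjk
  have : Nontrivial ι := ⟨j, k, hjk⟩
  have x_nonneg := hx.nonneg
  have le_add_of_ne : ∀ l ≠ a, x i ≤ x l + x a := fun l hl => hx i l a hl
  have le_add := hx i j k hjk
  simp only [_root_.vecMul_rauzyGen]
  grind

lemma PairTriangle.vecMul_rauzyProd (hx : PairTriangle x) (w : List ι) :
    PairTriangle (x ᵥ* rauzyProd w) := by
  induction w generalizing x with
  | nil => simpa [rauzyProd] using hx
  | cons a w ih => simpa [rauzyProd, vecMul_vecMul] using ih (hx.vecMul_rauzyGen a)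

lemma PairTriangle.vecMul_rauzyGen_mul_rauzyGen_comparable (hx : PairTriangle x) {a b : ι}
    (hab : a ≠ b) (j : ι) :
    (x ᵥ* (rauzyGen a * rauzyGen b)) b ≤ (x ᵥ* (rauzyGen a * rauzyGen b)) j ∧
      (x ᵥ* (rauzyGen a * rauzyGen b)) j ≤ 3 * (x ᵥ* (rauzyGen a * rauzyGen b)) b := by
  have : Nontrivial ι := ⟨a, b, hab⟩
  have x_nonneg := hx.nonneg
  have hjab := hx j a b hab
  simp only [← vecMul_vecMul, _root_.vecMul_rauzyGen]
  grind

theorem norm_image_nonneg_vector_ge_general (u : List ι) {a b : ι} (hab : a ≠ b) {v : ι → ℝ}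
    (hv : ∀ i, 0 ≤ v i) :
    (3 * Fintype.card ι : ℝ)⁻¹ * ‖(rauzyProd (u ++ [a, b]) : Matrix ι ι ℝ)‖ * ‖toLp 2 v‖ ≤
      ‖toLp 2 (rauzyProd (u ++ [a, b]) *ᵥ v)‖ := by
  set B : Matrix ι ι ℝ := rauzyProd (u ++ [a, b]) with hB
  have : Nonempty ι := ⟨a⟩
  have one_vecMul_B : 1 ᵥ* B = (1 ᵥ* rauzyProd u) ᵥ* (rauzyGen a * rauzyGen b) := by
    simp [hB, rauzyProd, vecMul_vecMul]
  have comparable (j : ι) : (1 ᵥ* B) b ≤ (1 ᵥ* B) j ∧ (1 ᵥ* B) j ≤ 3 * (1 ᵥ* B) b := by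
    rw [one_vecMul_B]
    exact (pairTriangle_one.vecMul_rauzyProd u).vecMul_rauzyGen_mul_rauzyGen_comparable hab j
  have colSum_nonneg : 0 ≤ (1 ᵥ* B) b := by linarith [(comparable b).2]
  have main := l2_opNorm_mul_euclideanNorm_le_of_one_vecMul_le
    (rauzyProd_apply_nonneg (u ++ [a, b])) colSum_nonneg zero_le_three
    (fun j => (comparable j).1) (fun j => (comparable j).2) hv
  rw [mul_assoc, inv_mul_le_iff₀ (by positivity)]
  rwa [mul_assoc (3 : ℝ), Real.mul_self_sqrt (Nat.cast_nonneg _)] at main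

end Rauzy

lemma A_eq_rauzyGen : A = rauzyGen := by
  ext a i j
  fin_cases a <;> fin_cases i <;> fin_cases j <;> simp [A, rauzyGen, updateRow_apply]

lemma Aw_eq_rauzyProd (w : List (Fin 3)) : Aw w = rauzyProd w := by
  rw [Aw, rauzyProd, A_eq_rauzyGen]

lemma sval1_eq_l2_opNorm (g : M3) : sval1 g = ‖g‖ := rfl

lemma enorm3_eq_euclideanNorm (v : Fin 3 → ℝ) : enorm3 v = ‖toLp 2 v‖ := by
  simp [EuclideanSpace.norm_eq, Fin.sum_univ_three, enorm3]

/-- For words whose last two letters differ, `‖A_w v‖ ≥ c ‖A_w‖ ‖v‖` for every vector `v`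
with nonnegative coordinates. -/
theorem norm_image_nonneg_vector_ge :
    ∃ c > (0:ℝ), ∀ w : List (Fin 3), LastTwoDiff w →
      ∀ v : Fin 3 → ℝ, (∀ i, 0 ≤ v i) →
        c * sval1 (Aw w) * enorm3 v ≤ enorm3 (Aw w *ᵥ v) := by
  refine ⟨(3 * Fintype.card (Fin 3) : ℝ)⁻¹, by positivity, ?_⟩
  rintro _ ⟨u, a, b, rfl, hab⟩ v hv
  simpa only [Aw_eq_rauzyProd, sval1_eq_l2_opNorm, enorm3_eq_euclideanNorm] using
    norm_image_nonneg_vector_ge_general u hab hv
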